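/- Let π₁, π₂ be strategy profiles of a finite discounted stochastic game with ‖π₁ − π₂‖∞ ≤ δ, and write D^{π}_{a^i}(s) = max(0, V^{π^i,π^{-i}}_{π^i(s,a^i)=1}(s) − V^{π^i,π^{-i}}(s)). Then for every agent i, state s, and action a^i, |D^{π₁}_{a^i}(s) − D^{π₂}_{a^i}(s)| ≤ 4nS²A_max R_max δ/(1−γ)², and |∑_{b^i∈𝔸^i} (D^{π₁}_{b^i}(s) − D^{π₂}_{b^i}(s))| ≤ 4nS²A_max²R_max δ/(1−γ)². -/

import Mathlib

/-!
The value of a profile is the fixed point of its Bellman operator, a `γ`-contraction for the sup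
norm, so the values of two profiles differ by at most `1 / (1 - γ)` times the amount by which the
two operators disagree at one of these values. That disagreement is the pairing of the difference
of two product distributions with a function bounded by `R_max / (1 - γ)`, and the outer product is
a multilinear map of norm one on `ℓ¹`, so a product distribution moves in `ℓ¹` by at most the sum
of the moves of its factors. Deviating does not increase the distance of two profiles, hence each
of the two values entering `D` moves by at most `n A_max R_max δ / (1 - γ)²`.
-/

open Finset

/-- A finite discounted stochastic game with `n` agents, `S` states and
action counts `A i` for each agent `i`. -/
structure SG (n S : ℕ) (A : Fin n → ℕ) where
  P : Fin S → (∀ i, Fin (A i)) → Fin S → ℝ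
  r : Fin n → Fin S → (∀ i, Fin (A i)) → ℝ
  Rmax : ℝ
  γ : ℝ
  P_nonneg : ∀ s a s', 0 ≤ P s a s'
  P_sum_one : ∀ s a, ∑ s', P s a s' = 1
  r_nonneg : ∀ i s a, 0 ≤ r i s a
  r_le_Rmax : ∀ i s a, r i s a ≤ Rmax
  γ_nonneg : 0 ≤ γ
  γ_lt_one : γ < 1

namespace SG

variable {n S : ℕ} {A : Fin n → ℕ}

/-- A (behavioral) strategy profile: agent `i` plays at state `s` the distribution
`π i s` on its actions. -/
abbrev Profile (n S : ℕ) (A : Fin n → ℕ) := ∀ i : Fin n, Fin S → Fin (A i) → ℝ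

/-- `π` is a genuine strategy profile: each `π i s` is a probability distribution. -/
def IsProfile (π : Profile n S A) : Prop :=
  (∀ i s a, 0 ≤ π i s a) ∧ ∀ i s, ∑ a, π i s a = 1

/-- `A_max`, the largest number of actions of any agent. -/
def Amax (A : Fin n → ℕ) : ℕ := Finset.univ.sup A

/-- Probability of the joint action `a` at state `s` under profile `π`. -/
def jointProb (π : Profile n S A) (s : Fin S) (a : ∀ i, Fin (A i)) : ℝ :=
  ∏ i, π i s (a i)

/-- The state-transition matrix `P^π` induced by the profile `π`. -/
noncomputable def Pmat (g : SG n S A) (π : Profile n S A) : Matrix (Fin S) (Fin S) ℝ :=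
  fun s s' => ∑ a, jointProb π s a * g.P s a s'

/-- Expected one-step reward `r^{i,π}(s)` of agent `i` at state `s` under `π`. -/
noncomputable def rvec (g : SG n S A) (π : Profile n S A) (i : Fin n) (s : Fin S) : ℝ :=
  ∑ a, jointProb π s a * g.r i s a

/-- The value function `V^{π^i,π^{-i}}` of agent `i` under profile `π`: the unique
solution of the Bellman equation `V = r^{i,π} + γ P^π V`, i.e. `(I − γP^π)⁻¹ r^{i,π}`. -/
noncomputable def V (g : SG n S A) (π : Profile n S A) (i : Fin n) : Fin S → ℝ :=
  Matrix.mulVec (1 - g.γ • g.Pmat π)⁻¹ (g.rvec π i)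

/-- The profile obtained from `π` by letting agent `i` play the pure action `a`
at state `s` (and `π i` at every other state). -/
def devProfile (π : Profile n S A) (i : Fin n) (s : Fin S) (a : Fin (A i)) : Profile n S A :=
  Function.update π i (fun t b => if t = s then (if b = a then (1 : ℝ) else 0) else π i t b)

/-- The one-step-deviation value `V^{π^i,π^{-i}}_{π^i(s,a)=1}(s)`. -/
noncomputable def Vdev (g : SG n S A) (π : Profile n S A) (i : Fin n) (s : Fin S)
    (a : Fin (A i)) : ℝ :=
  g.V (devProfile π i s a) i s

/-- `D^{π}_{a}(s) = max(0, V^{π^i,π^{-i}}_{π^i(s,a)=1}(s) − V^{π^i,π^{-i}}(s))`. -/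
noncomputable def D (g : SG n S A) (π : Profile n S A) (i : Fin n) (s : Fin S)
    (a : Fin (A i)) : ℝ :=
  max 0 (g.Vdev π i s a - g.V π i s)

/-- Nash's improvement map `f` on strategy profiles. -/
noncomputable def f (g : SG n S A) (π : Profile n S A) : Profile n S A :=
  fun i s a => (π i s a + g.D π i s a) / (1 + ∑ b, g.D π i s b)

/-- `π` is a Markov perfect equilibrium: no agent can improve its value at any state
by unilaterally switching to another behavioral strategy. -/
def IsMPE (g : SG n S A) (π : Profile n S A) : Prop :=
  ∀ (s : Fin S) (i : Fin n) (σ : Fin S → Fin (A i) → ℝ),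
    ((∀ t b, 0 ≤ σ t b) ∧ ∀ t, ∑ b, σ t b = 1) →
    g.V (Function.update π i σ) i s ≤ g.V π i s

/-- `π` is an `ε`-approximate Markov perfect equilibrium. -/
def IsApproxMPE (g : SG n S A) (π : Profile n S A) (ε : ℝ) : Prop :=
  ∀ (s : Fin S) (i : Fin n) (σ : Fin S → Fin (A i) → ℝ),
    ((∀ t b, 0 ≤ σ t b) ∧ ∀ t, ∑ b, σ t b = 1) →
    g.V (Function.update π i σ) i s - ε ≤ g.V π i s

end SG

section OuterProduct

variable {ι : Type*} [Fintype ι]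

/-- The outer product `⨂ i, p i` of families of scalars, as a multilinear map between `ℓ¹` spaces;
for probability vectors it is their product distribution. -/
noncomputable def outerProduct (𝕜 : Type*) [NormedField 𝕜] (α : ι → Type*) :
    MultilinearMap 𝕜 (fun i => PiLp 1 fun _ : α i => 𝕜) (PiLp 1 fun _ : ∀ i, α i => 𝕜) :=
  (WithLp.linearEquiv 1 𝕜 _).symm.toLinearMap.compMultilinearMap <|
    MultilinearMap.pi fun a => (MultilinearMap.mkPiAlgebra 𝕜 ι 𝕜).compLinearMap fun i =>
      LinearMap.proj (a i) ∘ₗ (WithLp.linearEquiv 1 𝕜 (α i → 𝕜)).toLinearMap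

@[simp]
lemma outerProduct_apply {𝕜 : Type*} [NormedField 𝕜] {α : ι → Type*}
    (p : ∀ i, PiLp 1 fun _ : α i => 𝕜) (a : ∀ i, α i) :
    outerProduct 𝕜 α p a = ∏ i, p i (a i) := by
  simp [outerProduct]

variable [DecidableEq ι] {α : ι → Type*} [∀ i, Fintype (α i)]

lemma norm_outerProduct {𝕜 : Type*} [NormedField 𝕜] (p : ∀ i, PiLp 1 fun _ : α i => 𝕜) :
    ‖outerProduct 𝕜 α p‖ = ∏ i, ‖p i‖ := by
  simp only [PiLp.norm_eq_of_L1, outerProduct_apply, norm_prod, Fintype.prod_sum]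

lemma norm_outerProduct_sub_le {𝕜 : Type*} [NontriviallyNormedField 𝕜]
    {p q : ∀ i, PiLp 1 fun _ : α i => 𝕜} (hp : ∀ i, ‖p i‖ ≤ 1) (hq : ∀ i, ‖q i‖ ≤ 1) :
    ‖outerProduct 𝕜 α p - outerProduct 𝕜 α q‖ ≤ ∑ i, ‖p i - q i‖ := by
  calc ‖outerProduct 𝕜 α p - outerProduct 𝕜 α q‖
      ≤ 1 * ∑ i, ∏ j, if j = i then ‖p i - q i‖ else max ‖p j‖ ‖q j‖ :=
        (outerProduct 𝕜 α).norm_image_sub_le_of_bound' zero_le_one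
          (fun p => by rw [norm_outerProduct, one_mul]) p q
    _ ≤ 1 * ∑ i, ∏ j, if j = i then ‖p i - q i‖ else 1 := by
        gcongr with i _ j
        split_ifs
        exacts [le_rfl, max_le (hp j) (hq j)]
    _ = ∑ i, ‖p i - q i‖ := by simp

end OuterProduct

section StdSimplex

variable {ι : Type*} [Fintype ι]

lemma prod_mem_stdSimplex [DecidableEq ι] {R : Type*} [CommSemiring R] [PartialOrder R]
    [IsOrderedRing R] {α : ι → Type*} [∀ i, Fintype (α i)] {p : ∀ i, α i → R}
    (hp : ∀ i, p i ∈ stdSimplex R (α i)) :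
    (fun a : ∀ i, α i => ∏ i, p i (a i)) ∈ stdSimplex R (∀ i, α i) :=
  ⟨fun a => prod_nonneg fun i _ => (hp i).1 (a i), by simp [← Fintype.prod_sum, (hp _).2]⟩

lemma nonempty_of_mem_stdSimplex {R : Type*} [Semiring R] [PartialOrder R] [Nontrivial R]
    {w : ι → R} (hw : w ∈ stdSimplex R ι) : Nonempty ι := by
  by_contra! hι
  simpa using hw.2

section LinearOrderedRing

variable {R : Type*} [Ring R] [LinearOrder R] [IsOrderedRing R] {w v : ι → R} {C : R}

lemma sum_abs_eq_one_of_mem_stdSimplex (hw : w ∈ stdSimplex R ι) : ∑ i, |w i| = 1 := by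
  simpa only [abs_of_nonneg (hw.1 _)] using hw.2

lemma abs_dotProduct_le_sum_abs_mul (hv : ∀ i, |v i| ≤ C) :
    |w ⬝ᵥ v| ≤ (∑ i, |w i|) * C := by
  calc |∑ i, w i * v i| ≤ ∑ i, |w i * v i| := abs_sum_le_sum_abs _ _
    _ ≤ ∑ i, |w i| * C := by
        gcongr with i
        rw [abs_mul]
        gcongr
        exact hv i
    _ = (∑ i, |w i|) * C := (sum_mul ..).symm

lemma abs_dotProduct_le_of_mem_stdSimplex (hw : w ∈ stdSimplex R ι) (hv : ∀ i, |v i| ≤ C) :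
    |w ⬝ᵥ v| ≤ C := by
  simpa [sum_abs_eq_one_of_mem_stdSimplex hw] using abs_dotProduct_le_sum_abs_mul (w := w) hv

end LinearOrderedRing

lemma sum_abs_prod_sub_prod_le [DecidableEq ι] {α : ι → Type*} [∀ i, Fintype (α i)]
    {p q : ∀ i, α i → ℝ} (hp : ∀ i, p i ∈ stdSimplex ℝ (α i)) (hq : ∀ i, q i ∈ stdSimplex ℝ (α i)) :
    ∑ a : ∀ i, α i, |∏ i, p i (a i) - ∏ i, q i (a i)| ≤ ∑ i, ∑ b, |p i b - q i b| := by
  have norm_toLp_le {i} {x : α i → ℝ} (hx : x ∈ stdSimplex ℝ (α i)) : ‖WithLp.toLp 1 x‖ ≤ 1 := by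
    simp [PiLp.norm_eq_of_L1, sum_abs_eq_one_of_mem_stdSimplex hx]
  simpa [PiLp.norm_eq_of_L1] using
    norm_outerProduct_sub_le (fun i => norm_toLp_le (hp i)) (fun i => norm_toLp_le (hq i))

end StdSimplex

section AffineContraction

open Matrix
open scoped Matrix.Norms.Operator NNReal

variable {ι : Type*} [Fintype ι] {M : Matrix ι ι ℝ}

lemma nnnorm_le_one_of_mem_rowStochastic [DecidableEq ι] (hM : M ∈ rowStochastic ℝ ι) :
    ‖M‖₊ ≤ 1 := by
  rw [linfty_opNNNorm_def]
  refine Finset.sup_le fun i _ => NNReal.coe_le_coe.1 ?_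
  have row_mem : M i ∈ stdSimplex ℝ ι := ⟨fun _ => hM.1 i _, sum_row_of_mem_rowStochastic hM i⟩
  simpa using (sum_abs_eq_one_of_mem_stdSimplex row_mem).le

lemma contractingWith_add_mulVec {K : ℝ≥0} (hK : K < 1) (hM : ‖M‖₊ ≤ K) (b : ι → ℝ) :
    ContractingWith K fun v => b + M *ᵥ v := by
  refine ⟨hK, LipschitzWith.of_dist_le_mul fun v w => ?_⟩
  rw [dist_add_left, dist_eq_norm, dist_eq_norm, ← mulVec_sub]
  exact (linfty_opNorm_mulVec M (v - w)).trans (by gcongr; exact hM)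

lemma isFixedPt_add_mulVec_inv [DecidableEq ι] (hM : ‖M‖₊ < 1) (b : ι → ℝ) :
    Function.IsFixedPt (fun v => b + M *ᵥ v) ((1 - M)⁻¹ *ᵥ b) := by
  have unit_det : IsUnit (1 - M).det :=
    (isUnit_iff_isUnit_det _).1 (isUnit_one_sub_of_norm_lt_one hM)
  have residual : (1 - M) *ᵥ ((1 - M)⁻¹ *ᵥ b) = b := by
    rw [mulVec_mulVec, mul_nonsing_inv _ unit_det, one_mulVec]
  rw [sub_mulVec, one_mulVec] at residual
  exact (eq_add_of_sub_eq residual).symm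

end AffineContraction

namespace SG

variable {n S : ℕ} {A : Fin n → ℕ} {π π₁ π₂ : Profile n S A}

lemma isProfile_iff_mem_stdSimplex :
    IsProfile π ↔ ∀ i s, π i s ∈ stdSimplex ℝ (Fin (A i)) := by
  simp only [IsProfile, stdSimplex, Set.mem_ofPred_eq, forall_and]

lemma IsProfile.mem_stdSimplex (h : IsProfile π) (i : Fin n) (s : Fin S) :
    π i s ∈ stdSimplex ℝ (Fin (A i)) :=
  isProfile_iff_mem_stdSimplex.1 h i s

lemma IsProfile.jointProb_mem_stdSimplex (h : IsProfile π) (s : Fin S) :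
    jointProb π s ∈ stdSimplex ℝ (∀ i, Fin (A i)) :=
  prod_mem_stdSimplex fun i => h.mem_stdSimplex i s

lemma le_Amax (i : Fin n) : A i ≤ Amax A :=
  le_sup (mem_univ i)

lemma sum_abs_jointProb_sub_le (h₁ : IsProfile π₁) (h₂ : IsProfile π₂) (s : Fin S) :
    ∑ a, |jointProb π₁ s a - jointProb π₂ s a| ≤ n * Amax A * ‖π₁ - π₂‖ := by
  calc ∑ a, |jointProb π₁ s a - jointProb π₂ s a|
      ≤ ∑ i, ∑ b, ‖(π₁ - π₂) i s b‖ :=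
        sum_abs_prod_sub_prod_le (fun i => h₁.mem_stdSimplex i s) fun i => h₂.mem_stdSimplex i s
    _ ≤ ∑ i, (A i : ℝ) * ‖(π₁ - π₂) i s‖ := by
        gcongr with i
        simpa using Pi.sum_norm_apply_le_norm ((π₁ - π₂) i s)
    _ ≤ ∑ _i : Fin n, (Amax A : ℝ) * ‖π₁ - π₂‖ := by
        gcongr with i
        · exact le_Amax i
        · exact (norm_le_pi_norm _ s).trans (norm_le_pi_norm _ i)
    _ = n * Amax A * ‖π₁ - π₂‖ := by simp [mul_assoc]

/-- The one-step lookahead (`Q`-function) `r^i(s,a) + γ ∑ P(s'|s,a) v(s')` of agent `i` for the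
continuation values `v`. -/
noncomputable def lookahead (g : SG n S A) (i : Fin n) (v : Fin S → ℝ) (s : Fin S)
    (a : ∀ i, Fin (A i)) : ℝ :=
  g.r i s a + g.γ * g.P s a ⬝ᵥ v

/-- The Bellman operator `v ↦ r^{i,π} + γ P^π v`, written as the mean of the one-step lookahead
under the joint action distribution. -/
noncomputable def bellmanOp (g : SG n S A) (π : Profile n S A) (i : Fin n) (v : Fin S → ℝ) :
    Fin S → ℝ :=
  fun s => jointProb π s ⬝ᵥ g.lookahead i v s

lemma bellmanOp_eq_add_mulVec (g : SG n S A) (π : Profile n S A) (i : Fin n) :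
    g.bellmanOp π i = fun v => g.rvec π i + Matrix.mulVec (g.γ • g.Pmat π) v := by
  ext v s
  simp only [bellmanOp, lookahead, rvec, Pmat, dotProduct, Matrix.mulVec, Pi.add_apply,
    Matrix.smul_apply, smul_eq_mul, mul_add, sum_add_distrib, mul_sum, sum_mul]
  rw [sum_comm]
  simp only [mul_assoc, mul_left_comm]

lemma abs_r_le (g : SG n S A) (i : Fin n) (s : Fin S) (a : ∀ i, Fin (A i)) :
    |g.r i s a| ≤ g.Rmax :=
  (abs_of_nonneg (g.r_nonneg i s a)).trans_le (g.r_le_Rmax i s a)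

lemma abs_lookahead_le (g : SG n S A) (i : Fin n) (v : Fin S → ℝ) (s : Fin S)
    (a : ∀ i, Fin (A i)) : |g.lookahead i v s a| ≤ g.Rmax + g.γ * ‖v‖ := by
  have mean_le : |g.P s a ⬝ᵥ v| ≤ ‖v‖ :=
    abs_dotProduct_le_of_mem_stdSimplex ⟨g.P_nonneg s a, g.P_sum_one s a⟩ (norm_le_pi_norm v)
  calc |g.lookahead i v s a| ≤ |g.r i s a| + |g.γ * g.P s a ⬝ᵥ v| := abs_add_le _ _
    _ = |g.r i s a| + g.γ * |g.P s a ⬝ᵥ v| := by rw [abs_mul, abs_of_nonneg g.γ_nonneg]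
    _ ≤ g.Rmax + g.γ * ‖v‖ :=
        add_le_add (g.abs_r_le i s a) (mul_le_mul_of_nonneg_left mean_le g.γ_nonneg)

lemma abs_bellmanOp_le (g : SG n S A) (h : IsProfile π) (i : Fin n) (v : Fin S → ℝ)
    (s : Fin S) : |g.bellmanOp π i v s| ≤ g.Rmax + g.γ * ‖v‖ :=
  abs_dotProduct_le_of_mem_stdSimplex (h.jointProb_mem_stdSimplex s) (g.abs_lookahead_le i v s)

lemma abs_bellmanOp_sub_le (g : SG n S A) (π₁ π₂ : Profile n S A) (i : Fin n)
    (v : Fin S → ℝ) (s : Fin S) :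
    |g.bellmanOp π₁ i v s - g.bellmanOp π₂ i v s| ≤
      (∑ a, |jointProb π₁ s a - jointProb π₂ s a|) * (g.Rmax + g.γ * ‖v‖) := by
  rw [bellmanOp, bellmanOp, ← sub_dotProduct]
  exact abs_dotProduct_le_sum_abs_mul (g.abs_lookahead_le i v s)

lemma Pmat_mem_rowStochastic (g : SG n S A) (h : IsProfile π) :
    g.Pmat π ∈ Matrix.rowStochastic ℝ (Fin S) := by
  refine Matrix.mem_rowStochastic_iff_sum.2 ⟨fun s t => ?_, fun s => ?_⟩
  · exact sum_nonneg fun a _ => mul_nonneg ((h.jointProb_mem_stdSimplex s).1 a) (g.P_nonneg s a t)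
  · simp only [Pmat]
    rw [sum_comm]
    simp only [← mul_sum, g.P_sum_one, mul_one, (h.jointProb_mem_stdSimplex s).2]

open scoped Matrix.Norms.Operator in
lemma nnnorm_smul_Pmat_le (g : SG n S A) (h : IsProfile π) :
    ‖g.γ • g.Pmat π‖₊ ≤ g.γ.toNNReal := by
  rw [nnnorm_smul, Real.toNNReal_eq_nnnorm_of_nonneg g.γ_nonneg]
  exact mul_le_of_le_one_right' (nnnorm_le_one_of_mem_rowStochastic (g.Pmat_mem_rowStochastic h))

lemma contractingWith_bellmanOp (g : SG n S A) (h : IsProfile π) (i : Fin n) :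
    ContractingWith g.γ.toNNReal (g.bellmanOp π i) := by
  rw [bellmanOp_eq_add_mulVec]
  exact contractingWith_add_mulVec (Real.toNNReal_lt_one.2 g.γ_lt_one) (g.nnnorm_smul_Pmat_le h) _

lemma isFixedPt_bellmanOp_V (g : SG n S A) (h : IsProfile π) (i : Fin n) :
    Function.IsFixedPt (g.bellmanOp π i) (g.V π i) := by
  rw [bellmanOp_eq_add_mulVec]
  exact isFixedPt_add_mulVec_inv
    ((g.nnnorm_smul_Pmat_le h).trans_lt (Real.toNNReal_lt_one.2 g.γ_lt_one)) _

lemma norm_sub_V_le (g : SG n S A) (h : IsProfile π) (i : Fin n) (v : Fin S → ℝ) :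
    ‖v - g.V π i‖ ≤ ‖v - g.bellmanOp π i v‖ / (1 - g.γ) := by
  simpa only [dist_eq_norm, Real.coe_toNNReal _ g.γ_nonneg] using
    (g.contractingWith_bellmanOp h i).dist_le_of_fixedPoint v (g.isFixedPt_bellmanOp_V h i)

lemma norm_V_le [Nonempty (Fin S)] (g : SG n S A) (h : IsProfile π) (i : Fin n) :
    ‖g.V π i‖ ≤ g.Rmax / (1 - g.γ) := by
  have hγ : 0 < 1 - g.γ := sub_pos.2 g.γ_lt_one
  have bellmanOp_zero_le : ‖g.bellmanOp π i 0‖ ≤ g.Rmax :=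
    (pi_norm_le_iff_of_nonempty _).2 fun s => by simpa using g.abs_bellmanOp_le h i 0 s
  calc ‖g.V π i‖ ≤ ‖g.bellmanOp π i 0‖ / (1 - g.γ) := by simpa using g.norm_sub_V_le h i 0
    _ ≤ g.Rmax / (1 - g.γ) := by gcongr

lemma Rmax_nonneg [Nonempty (Fin S)] (g : SG n S A) (h : IsProfile π) (i : Fin n) :
    0 ≤ g.Rmax := by
  inhabit Fin S
  obtain ⟨a⟩ := nonempty_of_mem_stdSimplex (h.jointProb_mem_stdSimplex (default : Fin S))
  exact (g.r_nonneg i default a).trans (g.r_le_Rmax i default a)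

lemma norm_V_sub_le_of_sum_abs_jointProb_sub_le [Nonempty (Fin S)] (g : SG n S A)
    (h₁ : IsProfile π₁) (h₂ : IsProfile π₂) {C : ℝ}
    (hC : ∀ s, ∑ a, |jointProb π₁ s a - jointProb π₂ s a| ≤ C) (i : Fin n) :
    ‖g.V π₁ i - g.V π₂ i‖ ≤ C * g.Rmax / (1 - g.γ) ^ 2 := by
  have hγ : 0 < 1 - g.γ := sub_pos.2 g.γ_lt_one
  have hR : 0 ≤ g.Rmax := g.Rmax_nonneg h₁ i
  have lookahead_bound : g.Rmax + g.γ * ‖g.V π₁ i‖ ≤ g.Rmax / (1 - g.γ) := by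
    calc g.Rmax + g.γ * ‖g.V π₁ i‖ ≤ g.Rmax + g.γ * (g.Rmax / (1 - g.γ)) := by
          gcongr
          exacts [g.γ_nonneg, g.norm_V_le h₁ i]
      _ = g.Rmax / (1 - g.γ) := by field_simp; ring
  have residual : ‖g.V π₁ i - g.bellmanOp π₂ i (g.V π₁ i)‖ ≤ C * (g.Rmax / (1 - g.γ)) := by
    nth_rw 1 [← (g.isFixedPt_bellmanOp_V h₁ i).eq]
    refine (pi_norm_le_iff_of_nonempty _).2 fun s => ?_
    refine (g.abs_bellmanOp_sub_le π₁ π₂ i _ s).trans ?_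
    have hC₀ : 0 ≤ C := (sum_nonneg fun _ _ => abs_nonneg _).trans (hC s)
    exact mul_le_mul (hC s) lookahead_bound
      (add_nonneg hR (mul_nonneg g.γ_nonneg (norm_nonneg _))) hC₀
  calc ‖g.V π₁ i - g.V π₂ i‖ ≤ ‖g.V π₁ i - g.bellmanOp π₂ i (g.V π₁ i)‖ / (1 - g.γ) :=
        g.norm_sub_V_le h₂ i _
    _ ≤ C * (g.Rmax / (1 - g.γ)) / (1 - g.γ) := by gcongr
    _ = C * g.Rmax / (1 - g.γ) ^ 2 := by field_simp

lemma norm_V_sub_le [Nonempty (Fin S)] (g : SG n S A) (h₁ : IsProfile π₁) (h₂ : IsProfile π₂)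
    (i : Fin n) :
    ‖g.V π₁ i - g.V π₂ i‖ ≤ n * Amax A * ‖π₁ - π₂‖ * g.Rmax / (1 - g.γ) ^ 2 :=
  g.norm_V_sub_le_of_sum_abs_jointProb_sub_le h₁ h₂ (sum_abs_jointProb_sub_le h₁ h₂) i

lemma devProfile_self (π : Profile n S A) (i : Fin n) (s : Fin S) (a : Fin (A i)) :
    devProfile π i s a i s = Pi.single a 1 := by
  ext b
  simp [devProfile, Pi.single_apply]

lemma devProfile_of_ne (π : Profile n S A) {i j : Fin n} {s t : Fin S} (a : Fin (A i))
    (hne : (j, t) ≠ (i, s)) : devProfile π i s a j t = π j t := by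
  obtain rfl | hj := eq_or_ne j i
  · have ht : t ≠ s := by rintro rfl; exact hne rfl
    ext b
    simp [devProfile, ht]
  · simp [devProfile, hj]

lemma IsProfile.devProfile (h : IsProfile π) (i : Fin n) (s : Fin S) (a : Fin (A i)) :
    IsProfile (devProfile π i s a) := by
  refine isProfile_iff_mem_stdSimplex.2 fun j t => ?_
  by_cases hjt : (j, t) = (i, s)
  · obtain ⟨rfl, rfl⟩ := Prod.mk.inj hjt
    exact devProfile_self π j t a ▸ single_mem_stdSimplex ℝ a
  · exact devProfile_of_ne π a hjt ▸ h.mem_stdSimplex j t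

lemma norm_devProfile_sub_le (π₁ π₂ : Profile n S A) (i : Fin n) (s : Fin S) (a : Fin (A i)) :
    ‖devProfile π₁ i s a - devProfile π₂ i s a‖ ≤ ‖π₁ - π₂‖ := by
  refine (pi_norm_le_iff_of_nonneg (norm_nonneg _)).2 fun j =>
    (pi_norm_le_iff_of_nonneg (norm_nonneg _)).2 fun t => ?_
  by_cases hjt : (j, t) = (i, s)
  · obtain ⟨rfl, rfl⟩ := Prod.mk.inj hjt
    simp [devProfile_self]
  · simp only [Pi.sub_apply, devProfile_of_ne _ a hjt]
    exact (norm_le_pi_norm ((π₁ - π₂) j) t).trans (norm_le_pi_norm (π₁ - π₂) j)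

lemma abs_D_sub_le (g : SG n S A) (h₁ : IsProfile π₁) (h₂ : IsProfile π₂) (i : Fin n)
    (s : Fin S) (a : Fin (A i)) :
    |g.D π₁ i s a - g.D π₂ i s a| ≤
      2 * n * Amax A * g.Rmax * ‖π₁ - π₂‖ / (1 - g.γ) ^ 2 := by
  have : Nonempty (Fin S) := ⟨s⟩
  have hR : 0 ≤ g.Rmax := g.Rmax_nonneg h₁ i
  have value_le : |g.V π₁ i s - g.V π₂ i s| ≤
      n * Amax A * ‖π₁ - π₂‖ * g.Rmax / (1 - g.γ) ^ 2 :=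
    (norm_le_pi_norm (g.V π₁ i - g.V π₂ i) s).trans (g.norm_V_sub_le h₁ h₂ i)
  have deviation_le : |g.Vdev π₁ i s a - g.Vdev π₂ i s a| ≤
      n * Amax A * ‖π₁ - π₂‖ * g.Rmax / (1 - g.γ) ^ 2 := by
    refine (norm_le_pi_norm (g.V _ i - g.V _ i) s).trans <|
      (g.norm_V_sub_le (h₁.devProfile i s a) (h₂.devProfile i s a) i).trans ?_
    gcongr
    exact norm_devProfile_sub_le π₁ π₂ i s a
  calc |g.D π₁ i s a - g.D π₂ i s a|
      ≤ |(g.Vdev π₁ i s a - g.V π₁ i s) - (g.Vdev π₂ i s a - g.V π₂ i s)| := by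
        simpa only [D, max_comm (0 : ℝ)] using abs_max_sub_max_le_abs _ _ (0 : ℝ)
    _ = |(g.Vdev π₁ i s a - g.Vdev π₂ i s a) - (g.V π₁ i s - g.V π₂ i s)| := by
        rw [sub_sub_sub_comm]
    _ ≤ |g.Vdev π₁ i s a - g.Vdev π₂ i s a| + |g.V π₁ i s - g.V π₂ i s| := abs_sub _ _
    _ ≤ _ := add_le_add deviation_le value_le
    _ = 2 * n * Amax A * g.Rmax * ‖π₁ - π₂‖ / (1 - g.γ) ^ 2 := by ring

lemma abs_sum_D_sub_le (g : SG n S A) (h₁ : IsProfile π₁) (h₂ : IsProfile π₂) (i : Fin n)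
    (s : Fin S) :
    |∑ b, (g.D π₁ i s b - g.D π₂ i s b)| ≤
      2 * n * Amax A ^ 2 * g.Rmax * ‖π₁ - π₂‖ / (1 - g.γ) ^ 2 := by
  have : Nonempty (Fin S) := ⟨s⟩
  have hR : 0 ≤ g.Rmax := g.Rmax_nonneg h₁ i
  calc |∑ b, (g.D π₁ i s b - g.D π₂ i s b)|
      ≤ ∑ b, |g.D π₁ i s b - g.D π₂ i s b| := abs_sum_le_sum_abs _ _
    _ ≤ ∑ _b : Fin (A i), 2 * n * Amax A * g.Rmax * ‖π₁ - π₂‖ / (1 - g.γ) ^ 2 :=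
        sum_le_sum fun b _ => g.abs_D_sub_le h₁ h₂ i s b
    _ = A i * (2 * n * Amax A * g.Rmax * ‖π₁ - π₂‖ / (1 - g.γ) ^ 2) := by simp
    _ ≤ Amax A * (2 * n * Amax A * g.Rmax * ‖π₁ - π₂‖ / (1 - g.γ) ^ 2) := by
        gcongr
        exact le_Amax i
    _ = 2 * n * Amax A ^ 2 * g.Rmax * ‖π₁ - π₂‖ / (1 - g.γ) ^ 2 := by ring

lemma IsProfile.norm_sub_le_of_forall_abs_sub_le (h : IsProfile π₁) (i : Fin n) (s : Fin S)
    {δ : ℝ} (hδ : ∀ i s a, |π₁ i s a - π₂ i s a| ≤ δ) : ‖π₁ - π₂‖ ≤ δ := by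
  obtain ⟨a⟩ := nonempty_of_mem_stdSimplex (h.mem_stdSimplex i s)
  have hδ₀ : 0 ≤ δ := (abs_nonneg _).trans (hδ i s a)
  simpa [pi_norm_le_iff_of_nonneg hδ₀] using hδ

end SG

open SG in
/-- Lipschitz-type bounds for the improvement gaps `D` and their sums. -/
theorem abs_D_diff_le {n S : ℕ} {A : Fin n → ℕ} (g : SG n S A)
    (π₁ π₂ : Profile n S A) (h₁ : IsProfile π₁) (h₂ : IsProfile π₂)
    (δ : ℝ) (hδ : ∀ i s a, |π₁ i s a - π₂ i s a| ≤ δ) :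
    (∀ (i : Fin n) (s : Fin S) (a : Fin (A i)),
      |g.D π₁ i s a - g.D π₂ i s a| ≤
        4 * (n : ℝ) * (S : ℝ) ^ 2 * (Amax A : ℝ) * g.Rmax * δ / (1 - g.γ) ^ 2) ∧
    (∀ (i : Fin n) (s : Fin S),
      |∑ b, (g.D π₁ i s b - g.D π₂ i s b)| ≤
        4 * (n : ℝ) * (S : ℝ) ^ 2 * (Amax A : ℝ) ^ 2 * g.Rmax * δ / (1 - g.γ) ^ 2)  := by
  have scale_le (i : Fin n) (s : Fin S) :
      0 ≤ g.Rmax ∧ ‖π₁ - π₂‖ ≤ δ ∧ 2 * (n : ℝ) ≤ 4 * n * (S : ℝ) ^ 2 := by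
    have : Nonempty (Fin S) := ⟨s⟩
    have one_le_S : (1 : ℝ) ≤ S := Nat.one_le_cast.2 s.pos
    refine ⟨g.Rmax_nonneg h₁ i, h₁.norm_sub_le_of_forall_abs_sub_le i s hδ, ?_⟩
    nlinarith [one_le_pow₀ one_le_S (n := 2), Nat.cast_nonneg (α := ℝ) n]
  refine ⟨fun i s a => ?_, fun i s => ?_⟩ <;> obtain ⟨hR, hπ, hS⟩ := scale_le i s
  · refine (g.abs_D_sub_le h₁ h₂ i s a).trans ?_
    gcongr ?_ * _ * _ * ?_ / _
  · refine (g.abs_sum_D_sub_le h₁ h₂ i s).trans ?_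
    gcongr ?_ * _ * _ * ?_ / _
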